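/- arXiv:2304.01840 — 4 statements merged into one kernel-verified Lean document; each statement's English description precedes it below -/
import Mathlib

section
/- There exists a function ν* : N → ℝ (the Gittins index) such that for every ν ∈ ℝ, the set S(ν) := {j ∈ N : ν*_j > ν} satisfies ν_j^{S(ν)} ≤ ν for all j ∉ S(ν) and ν_j^{S(ν)} ≥ ν for all j ∈ S(ν); consequently, for every ν ∈ ℝ, every initial state i ∈ N, and every feasible pair (x⁰, x¹) for i, Σ_j (R_j − ν) x¹_j ≤ f_i^{S(ν)} − ν g_i^{S(ν)}. -/
open Matrix BigOperators
open scoped Classical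

noncomputable section

/-- Transition matrix of the `S`-active policy: row `i` of `P` if `i ∈ S`,
the `i`-th standard unit row otherwise. -/
def PAct {N : Type*} [DecidableEq N] (P : Matrix N N ℝ) (S : Finset N) : Matrix N N ℝ :=
  fun i j => if i ∈ S then P i j else if i = j then 1 else 0

/-- Transition matrix of the `Sᶜ`-active policy. -/
def PPas {N : Type*} [DecidableEq N] (P : Matrix N N ℝ) (S : Finset N) : Matrix N N ℝ :=
  fun i j => if i ∈ S then (if i = j then 1 else 0) else P i j

/-- Basis matrix `B^S = I - β P^S`. -/
def BMat {N : Type*} [Fintype N] [DecidableEq N] (β : ℝ) (P : Matrix N N ℝ) (S : Finset N) :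
    Matrix N N ℝ := 1 - β • PAct P S

/-- Non-basic matrix `N^S = I - β P^{Sᶜ}`. -/
def NMat {N : Type*} [Fintype N] [DecidableEq N] (β : ℝ) (P : Matrix N N ℝ) (S : Finset N) :
    Matrix N N ℝ := 1 - β • PPas P S

/-- Basis inverse `H^S = (B^S)⁻¹`. -/
def HMat {N : Type*} [Fintype N] [DecidableEq N] (β : ℝ) (P : Matrix N N ℝ) (S : Finset N) :
    Matrix N N ℝ := (BMat β P S)⁻¹

/-- Tableau matrix `A^S = N^S · H^S`. -/
def AMat {N : Type*} [Fintype N] [DecidableEq N] (β : ℝ) (P : Matrix N N ℝ) (S : Finset N) :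
    Matrix N N ℝ := NMat β P S * HMat β P S

/-- Work measure `g^S = H^S · 1_S`. -/
def gWork {N : Type*} [Fintype N] [DecidableEq N] (β : ℝ) (P : Matrix N N ℝ) (S : Finset N) :
    N → ℝ := (HMat β P S).mulVec (fun j => if j ∈ S then 1 else 0)

/-- Reward measure `f^S = H^S · (R·1_S)`. -/
def fRew {N : Type*} [Fintype N] [DecidableEq N] (β : ℝ) (P : Matrix N N ℝ) (R : N → ℝ)
    (S : Finset N) : N → ℝ := (HMat β P S).mulVec (fun j => if j ∈ S then R j else 0)

/-- Marginal work `w_i^S`. -/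
def wMarg {N : Type*} [Fintype N] [DecidableEq N] (β : ℝ) (P : Matrix N N ℝ) (S : Finset N)
    (i : N) : ℝ :=
  if i ∈ S then (1 - β) * gWork β P S i
  else 1 + β * ∑ j ∈ S, P i j * gWork β P S j

/-- Marginal reward `r_i^S`. -/
def rMarg {N : Type*} [Fintype N] [DecidableEq N] (β : ℝ) (P : Matrix N N ℝ) (R : N → ℝ)
    (S : Finset N) (i : N) : ℝ :=
  if i ∈ S then (1 - β) * fRew β P R S i
  else R i + β * ∑ j ∈ S, P i j * fRew β P R S j

/-- Marginal productivity rate `ν_i^S = r_i^S / w_i^S`. -/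
def nuMarg {N : Type*} [Fintype N] [DecidableEq N] (β : ℝ) (P : Matrix N N ℝ) (R : N → ℝ)
    (S : Finset N) (i : N) : ℝ := rMarg β P R S i / wMarg β P S i

/-- Feasibility of a pair of row vectors `(x⁰, x¹)` for initial state `i`:
`x⁰, x¹ ≥ 0` and `(1-β) x⁰ + x¹ (I - β P) = e_i`. -/
def Feasible {N : Type*} [Fintype N] [DecidableEq N] (β : ℝ) (P : Matrix N N ℝ) (i : N)
    (x0 x1 : N → ℝ) : Prop :=
  (∀ j, 0 ≤ x0 j) ∧ (∀ j, 0 ≤ x1 j) ∧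
    (1 - β) • x0 + Matrix.vecMul x1 (1 - β • P) = Pi.single i 1

/-- Modified reward vector `R̂ = R - (I - βP)·Q`. -/
def Rhat {N : Type*} [Fintype N] [DecidableEq N] (β : ℝ) (P : Matrix N N ℝ) (R Q : N → ℝ) :
    N → ℝ := fun i => R i - ((1 - β • P).mulVec Q) i

lemma aux_max {N : Type*} [Fintype N]
    (Q : Matrix N N ℝ) (hQ0 : ∀ i j, 0 ≤ Q i j) (hQ1 : ∀ i, ∑ j, Q i j = 1)
    (β : ℝ) (hβ0 : 0 < β) (hβ1 : β < 1) (d : N → ℝ)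
    (hd : ∀ i, 0 < d i → d i ≤ β * ∑ j, Q i j * d j) : ∀ i, d i ≤ 0 := by
  intro i0
  obtain ⟨m, -, hm⟩ := Finset.exists_max_image Finset.univ d ⟨i0, Finset.mem_univ i0⟩
  by_contra hcon
  have hpos : 0 < d m := lt_of_lt_of_le (not_le.mp hcon) (hm i0 (Finset.mem_univ _))
  have h1 := hd m hpos
  have h2 : ∑ j, Q m j * d j ≤ d m := by
    calc ∑ j, Q m j * d j ≤ ∑ j, Q m j * d m :=
          Finset.sum_le_sum fun j _ => mul_le_mul_of_nonneg_left (hm j (Finset.mem_univ _)) (hQ0 m j)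
      _ = d m := by rw [← Finset.sum_mul, hQ1, one_mul]
  nlinarith

lemma aux_BMat_mulVec {N : Type*} [Fintype N] [DecidableEq N] (β : ℝ) (P : Matrix N N ℝ)
    (S : Finset N) (v : N → ℝ) (i : N) :
    ((BMat β P S).mulVec v) i
      = if i ∈ S then v i - β * ∑ j, P i j * v j else (1 - β) * v i := by
  unfold BMat
  rw [Matrix.sub_mulVec, Matrix.smul_mulVec, Matrix.one_mulVec]
  simp only [Pi.sub_apply, Pi.smul_apply, smul_eq_mul, Matrix.mulVec, dotProduct, PAct]
  split_ifs
  · rfl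
  · simp
    ring

lemma aux_unit {N : Type*} [Fintype N] [DecidableEq N]
    (P : Matrix N N ℝ) (hP0 : ∀ i j, 0 ≤ P i j) (hP1 : ∀ i, ∑ j, P i j = 1)
    (β : ℝ) (hβ0 : 0 < β) (hβ1 : β < 1) (S : Finset N) : IsUnit (BMat β P S) := by
  rw [← Matrix.mulVec_injective_iff_isUnit]
  have key : ∀ d : N → ℝ, (BMat β P S).mulVec d = 0 → ∀ i, d i ≤ 0 := by
    intro d hd
    apply aux_max P hP0 hP1 β hβ0 hβ1
    intro i hi
    have h := congrFun hd i
    rw [aux_BMat_mulVec] at h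
    simp only [Pi.zero_apply] at h
    split_ifs at h
    · linarith
    · nlinarith
  intro a b hab
  have h1 := key (a - b) (by rw [Matrix.mulVec_sub]; exact sub_eq_zero.mpr hab)
  have h2 := key (b - a) (by rw [Matrix.mulVec_sub]; exact sub_eq_zero.mpr hab.symm)
  ext i
  have := h1 i
  have := h2 i
  simp only [Pi.sub_apply] at *
  linarith

lemma aux_solve {N : Type*} [Fintype N] [DecidableEq N]
    (P : Matrix N N ℝ) (hP0 : ∀ i j, 0 ≤ P i j) (hP1 : ∀ i, ∑ j, P i j = 1)
    (β : ℝ) (hβ0 : 0 < β) (hβ1 : β < 1) (S : Finset N) (b : N → ℝ) :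
    (BMat β P S).mulVec ((HMat β P S).mulVec b) = b := by
  have h := aux_unit P hP0 hP1 β hβ0 hβ1 S
  unfold HMat
  rw [Matrix.mulVec_mulVec, Matrix.mul_nonsing_inv _ ((Matrix.isUnit_iff_isUnit_det _).mp h),
    Matrix.one_mulVec]

/-- Equations for a vector of the form `H^S (c 1_S)`. -/
lemma aux_eqs {N : Type*} [Fintype N] [DecidableEq N]
    (P : Matrix N N ℝ) (hP0 : ∀ i j, 0 ≤ P i j) (hP1 : ∀ i, ∑ j, P i j = 1)
    (β : ℝ) (hβ0 : 0 < β) (hβ1 : β < 1) (S : Finset N) (c v : N → ℝ)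
    (hv : v = (HMat β P S).mulVec (fun j => if j ∈ S then c j else 0)) :
    (∀ i ∈ S, v i = c i + β * ∑ j, P i j * v j) ∧ (∀ i ∉ S, v i = 0) := by
  have h := aux_solve P hP0 hP1 β hβ0 hβ1 S (fun j => if j ∈ S then c j else 0)
  rw [← hv] at h
  constructor
  · intro i hi
    have := congrFun h i
    rw [aux_BMat_mulVec] at this
    simp only [hi, if_true] at this
    linarith
  · intro i hi
    have := congrFun h i
    rw [aux_BMat_mulVec] at this
    simp only [hi, if_false] at this
    rcases mul_eq_zero.mp this with h | h
    · linarith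
    · exact h

lemma aux_sum_S {N : Type*} [Fintype N] [DecidableEq N] (S : Finset N) (p v : N → ℝ)
    (hv : ∀ i ∉ S, v i = 0) : ∑ j ∈ S, p j * v j = ∑ j, p j * v j := by
  apply Finset.sum_subset (Finset.subset_univ _)
  intro j _ hj
  rw [hv j hj, mul_zero]

/-- The optimality test from a solution of the Bellman equation. -/
lemma aux_main {N : Type*} [Fintype N] [DecidableEq N]
    (P : Matrix N N ℝ) (hP0 : ∀ i j, 0 ≤ P i j) (hP1 : ∀ i, ∑ j, P i j = 1)
    (β : ℝ) (hβ0 : 0 < β) (hβ1 : β < 1) (R : N → ℝ) (ν : ℝ) (V : N → ℝ)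
    (hV : ∀ i, V i = max 0 (R i - ν + β * ∑ j, P i j * V j))
    (S : Finset N) (hS : ∀ k, k ∈ S ↔ 0 < V k) :
    (∀ j ∉ S, nuMarg β P R S j ≤ ν) ∧ (∀ j ∈ S, ν ≤ nuMarg β P R S j) ∧
      (∀ i : N, ∀ x0 x1 : N → ℝ, Feasible β P i x0 x1 →
        ∑ j, (R j - ν) * x1 j ≤ fRew β P R S i - ν * gWork β P S i) := by
  have hVge : ∀ i, R i - ν + β * ∑ j, P i j * V j ≤ V i := by
    intro i
    conv_rhs => rw [hV i]
    exact le_max_right _ _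
  have hV0 : ∀ i, 0 ≤ V i := by
    intro i
    rw [hV i]
    exact le_max_left _ _
  have hVS : ∀ i ∈ S, V i = R i - ν + β * ∑ j, P i j * V j := by
    intro i hi
    have h1 := (hS i).mp hi
    rcases max_choice 0 (R i - ν + β * ∑ j, P i j * V j) with h | h
    · rw [hV i, h] at h1
      exact absurd h1 (lt_irrefl _)
    · rw [← hV i] at h
      exact h
  have hVn : ∀ i ∉ S, V i = 0 := fun i hi =>
    le_antisymm (not_lt.mp fun h => hi ((hS i).mpr h)) (hV0 i)
  obtain ⟨hg1, hg0⟩ := aux_eqs P hP0 hP1 β hβ0 hβ1 S (fun _ => 1) (gWork β P S) rfl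
  obtain ⟨hf1, hf0⟩ := aux_eqs P hP0 hP1 β hβ0 hβ1 S R (fRew β P R S) rfl
  have hinj := (Matrix.mulVec_injective_iff_isUnit).mpr (aux_unit P hP0 hP1 β hβ0 hβ1 S)
  have hlin : ∀ i, ∑ j, P i j * (fRew β P R S j - ν * gWork β P S j)
      = ∑ j, P i j * fRew β P R S j - ν * ∑ j, P i j * gWork β P S j := by
    intro i
    rw [Finset.mul_sum, ← Finset.sum_sub_distrib]
    exact Finset.sum_congr rfl fun j _ => by ring
  have hVeq : V = fun i => fRew β P R S i - ν * gWork β P S i := by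
    apply hinj
    ext i
    rw [aux_BMat_mulVec, aux_BMat_mulVec]
    split_ifs with hi
    · rw [hlin]
      have a := hVS i hi
      have b := hg1 i hi
      have c := hf1 i hi
      linear_combination a - c + ν * b
    · rw [hVn i hi, hg0 i hi, hf0 i hi]
      ring
  have hVeq' : ∀ i, V i = fRew β P R S i - ν * gWork β P S i := fun i => congrFun hVeq i
  have hPV : ∀ i, ∑ j, P i j * V j
      = ∑ j, P i j * fRew β P R S j - ν * ∑ j, P i j * gWork β P S j := by
    intro i
    rw [← hlin i]
    exact Finset.sum_congr rfl fun j _ => by rw [hVeq' j]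
  have hgnn : ∀ i, 0 ≤ gWork β P S i := by
    have := aux_max P hP0 hP1 β hβ0 hβ1 (fun i => - gWork β P S i) (by
      intro i hi
      by_cases h : i ∈ S
      · have h1 := hg1 i h
        simp only [mul_neg, Finset.sum_neg_distrib] at *
        linarith
      · have h1 := hg0 i h
        linarith)
    intro i
    have := this i
    linarith
  have hPg : ∀ i, 0 ≤ β * ∑ j, P i j * gWork β P S j := fun i =>
    mul_nonneg hβ0.le (Finset.sum_nonneg fun j _ => mul_nonneg (hP0 i j) (hgnn j))
  refine ⟨?_, ?_, ?_⟩
  · intro j hj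
    unfold nuMarg rMarg wMarg
    rw [if_neg hj, if_neg hj, aux_sum_S S _ _ hg0, aux_sum_S S _ _ hf0]
    rw [div_le_iff₀ (by linarith [hPg j])]
    have h1 := hVge j
    rw [hVn j hj, hPV] at h1
    linarith
  · intro j hj
    unfold nuMarg rMarg wMarg
    rw [if_pos hj, if_pos hj]
    have h1 := hg1 j hj
    have h2 := hPg j
    have h3 : 0 < gWork β P S j := by linarith
    rw [le_div_iff₀ (mul_pos (by linarith) h3)]
    have h4 := hVeq' j
    have h5 := hV0 j
    nlinarith
  · intro i x0 x1 ⟨hx0, hx1, hx⟩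
    rw [← hVeq' i]
    have h1 : ((1 - β) • x0 + Matrix.vecMul x1 (1 - β • P)) ⬝ᵥ V = V i := by
      rw [hx, single_dotProduct, one_mul]
    rw [add_dotProduct, ← Matrix.dotProduct_mulVec, smul_dotProduct] at h1
    have h2 : 0 ≤ (1 - β) • (x0 ⬝ᵥ V) := by
      rw [smul_eq_mul]
      exact mul_nonneg (by linarith) (Finset.sum_nonneg fun j _ => mul_nonneg (hx0 j) (hV0 j))
    have h3 : ∑ j, (R j - ν) * x1 j ≤ x1 ⬝ᵥ ((1 - β • P).mulVec V) := by
      apply Finset.sum_le_sum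
      intro j _
      rw [mul_comm]
      apply mul_le_mul_of_nonneg_left _ (hx1 j)
      rw [Matrix.sub_mulVec, Matrix.smul_mulVec, Matrix.one_mulVec]
      simp only [Pi.sub_apply, Pi.smul_apply, smul_eq_mul, Matrix.mulVec, dotProduct]
      linarith [hVge j]
    linarith

lemma aux_exists {N : Type*} [Fintype N]
    (P : Matrix N N ℝ) (hP0 : ∀ i j, 0 ≤ P i j) (hP1 : ∀ i, ∑ j, P i j = 1)
    (β : ℝ) (hβ0 : 0 < β) (hβ1 : β < 1) (c : N → ℝ) :
    ∃ V : N → ℝ, ∀ i, V i = max 0 (c i + β * ∑ j, P i j * V j) := by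
  have hT : ContractingWith ⟨β, hβ0.le⟩
      (fun (V : N → ℝ) i => max 0 (c i + β * ∑ j, P i j * V j)) := by
    refine ⟨by exact_mod_cast hβ1, LipschitzWith.of_dist_le_mul ?_⟩
    intro a b
    change _ ≤ β * dist a b
    rw [dist_pi_le_iff (mul_nonneg hβ0.le dist_nonneg)]
    intro i
    rw [Real.dist_eq]
    refine (abs_max_sub_max_le_max _ _ _ _).trans ?_
    rw [sub_self, abs_zero, max_eq_right (abs_nonneg _)]
    have h1 : c i + β * ∑ j, P i j * a j - (c i + β * ∑ j, P i j * b j)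
        = β * ∑ j, P i j * (a j - b j) := by
      simp only [mul_sub, Finset.sum_sub_distrib]
      ring
    rw [h1, abs_mul, abs_of_pos hβ0]
    apply mul_le_mul_of_nonneg_left _ hβ0.le
    calc |∑ j, P i j * (a j - b j)| ≤ ∑ j, |P i j * (a j - b j)| := Finset.abs_sum_le_sum_abs _ _
      _ ≤ ∑ j, P i j * dist a b := by
          apply Finset.sum_le_sum
          intro j _
          rw [abs_mul, abs_of_nonneg (hP0 i j)]
          apply mul_le_mul_of_nonneg_left _ (hP0 i j)
          rw [← Real.dist_eq]
          exact dist_le_pi_dist a b j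
      _ = dist a b := by rw [← Finset.sum_mul, hP1, one_mul]
  exact ⟨_, fun i => (congrFun hT.fixedPoint_isFixedPt i).symm⟩

/-- Comparison: the value at charge `μ` is at most the value at charge `ν` plus `e`
as soon as `ν - μ ≤ (1 - β) e` and `0 ≤ e`. -/
lemma aux_compare {N : Type*} [Fintype N]
    (P : Matrix N N ℝ) (hP0 : ∀ i j, 0 ≤ P i j) (hP1 : ∀ i, ∑ j, P i j = 1)
    (β : ℝ) (hβ0 : 0 < β) (hβ1 : β < 1) (R : N → ℝ) (μ ν e : ℝ) (he : 0 ≤ e)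
    (hμν : ν - μ ≤ (1 - β) * e) (U V : N → ℝ)
    (hU : ∀ i, U i = max 0 (R i - μ + β * ∑ j, P i j * U j))
    (hV : ∀ i, V i = max 0 (R i - ν + β * ∑ j, P i j * V j)) (i : N) : U i ≤ V i + e := by
  have := aux_max P hP0 hP1 β hβ0 hβ1 (fun i => U i - V i - e) (by
    intro i hi
    have h1 : 0 ≤ V i := by rw [hV i]; exact le_max_left _ _
    have h2 : R i - ν + β * ∑ j, P i j * V j ≤ V i := by
      conv_rhs => rw [hV i]
      exact le_max_right _ _
    have h3 : U i = R i - μ + β * ∑ j, P i j * U j := by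
      rcases max_choice 0 (R i - μ + β * ∑ j, P i j * U j) with h | h
      · rw [← hU i] at h
        linarith
      · rw [← hU i] at h
        exact h
    simp only [mul_sub, Finset.sum_sub_distrib]
    rw [← Finset.sum_mul, hP1, one_mul]
    linarith) i
  linarith

/-- existence of the Gittins index: a function `ν*` whose upper-level
sets `S(ν)` pass the optimality test for every `ν`, so that the `S(ν)`-active
solution is optimal for the ν-charge LP from every initial state. -/
theorem stmt2 {N : Type*} [Fintype N] [DecidableEq N] [Nonempty N]
    (P : Matrix N N ℝ) (hP0 : ∀ i j, 0 ≤ P i j) (hP1 : ∀ i, ∑ j, P i j = 1)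
    (β : ℝ) (hβ0 : 0 < β) (hβ1 : β < 1) (R : N → ℝ) :
    ∃ nustar : N → ℝ, ∀ ν : ℝ,
      (∀ j ∉ (Finset.univ.filter fun k => ν < nustar k),
          nuMarg β P R (Finset.univ.filter fun k => ν < nustar k) j ≤ ν) ∧
      (∀ j ∈ (Finset.univ.filter fun k => ν < nustar k),
          ν ≤ nuMarg β P R (Finset.univ.filter fun k => ν < nustar k) j) ∧
      (∀ i : N, ∀ x0 x1 : N → ℝ, Feasible β P i x0 x1 →
        ∑ j, (R j - ν) * x1 j
          ≤ fRew β P R (Finset.univ.filter fun k => ν < nustar k) i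
            - ν * gWork β P (Finset.univ.filter fun k => ν < nustar k) i) := by
  choose V hV using fun ν : ℝ => aux_exists P hP0 hP1 β hβ0 hβ1 (fun i => R i - ν)
  have hVnn : ∀ ν i, 0 ≤ V ν i := by
    intro ν i
    rw [hV ν i]
    exact le_max_left _ _
  have hmono : ∀ μ ν : ℝ, μ ≤ ν → ∀ i, V ν i ≤ V μ i := by
    intro μ ν h i
    have := aux_compare P hP0 hP1 β hβ0 hβ1 R ν μ 0 le_rfl (by linarith) (V ν) (V μ)
      (hV ν) (hV μ) i
    linarith
  have hne : ∀ i, ({ν : ℝ | 0 < V ν i}).Nonempty := by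
    intro i
    refine ⟨R i - 1, ?_⟩
    change 0 < V (R i - 1) i
    have h1 : R i - (R i - 1) + β * ∑ j, P i j * V (R i - 1) j ≤ V (R i - 1) i := by
      conv_rhs => rw [hV (R i - 1) i]
      exact le_max_right _ _
    have h2 : 0 ≤ β * ∑ j, P i j * V (R i - 1) j :=
      mul_nonneg hβ0.le (Finset.sum_nonneg fun j _ => mul_nonneg (hP0 i j) (hVnn _ j))
    linarith
  obtain ⟨m, -, hm⟩ := Finset.exists_max_image Finset.univ R Finset.univ_nonempty
  have hbdd : ∀ i, BddAbove {ν : ℝ | 0 < V ν i} := by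
    intro i
    refine ⟨R m, ?_⟩
    intro ν hν
    change 0 < V ν i at hν
    by_contra hlt
    have hlt := not_le.mp hlt
    have := aux_max P hP0 hP1 β hβ0 hβ1 (V ν) (by
      intro k hk
      have h3 := hm k (Finset.mem_univ _)
      rcases max_choice 0 (R k - ν + β * ∑ j, P k j * V ν j) with h | h
      · rw [← hV ν k] at h
        linarith
      · rw [← hV ν k] at h
        linarith) i
    linarith
  refine ⟨fun i => sSup {ν : ℝ | 0 < V ν i}, fun ν => ?_⟩
  apply aux_main P hP0 hP1 β hβ0 hβ1 R ν (V ν) (hV ν)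
  intro k
  rw [Finset.mem_filter]
  simp only [Finset.mem_univ, true_and]
  constructor
  · intro h
    obtain ⟨μ, hμ, hlt⟩ := exists_lt_of_lt_csSup (hne k) h
    exact lt_of_lt_of_le hμ (hmono ν μ hlt.le k)
  · intro h
    have hd : 0 < 1 - β := by linarith
    have hpos : 0 < (1 - β) * (V ν k / 2) := mul_pos hd (by linarith)
    refine lt_of_lt_of_le (b := ν + (1 - β) * (V ν k / 2)) (by linarith) ?_
    apply le_csSup (hbdd k)
    change 0 < V (ν + (1 - β) * (V ν k / 2)) k
    have := aux_compare P hP0 hP1 β hβ0 hβ1 R ν (ν + (1 - β) * (V ν k / 2)) (V ν k / 2)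
      (by linarith) (by linarith) _ _ (hV ν) (hV _) k
    linarith
end
end

section
/- Fix S ⊆ N, ν ∈ ℝ, and an initial state i ∈ N. For every feasible pair (x⁰, x¹) for i, Σ_j (R_j − ν) x¹_j = f_i^S − ν g_i^S − Σ_{j∈S} (r_j^S − ν w_j^S) x⁰_j + Σ_{j∉S} (r_j^S − ν w_j^S) x¹_j. (Proposition 3(c): decomposition of the ν-charge objective relative to the S-active policy.) -/
open Matrix BigOperators
open scoped Classical

noncomputable section

theorem det_BMat_ne_zero {N : Type*} [Fintype N] [DecidableEq N]
    (P : Matrix N N ℝ) (hP0 : ∀ i j, 0 ≤ P i j) (hP1 : ∀ i, ∑ j, P i j = 1)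
    (β : ℝ) (hβ0 : 0 < β) (hβ1 : β < 1) (S : Finset N) : (BMat β P S).det ≠ 0 := by
  have h0 : ∀ i j, 0 ≤ PAct P S i j := by
    intro i j
    unfold PAct
    split_ifs <;> first | exact hP0 i j | norm_num
  have h1 : ∀ i, ∑ j, PAct P S i j = 1 := by
    intro i
    unfold PAct
    by_cases h : i ∈ S
    · simp [h, hP1]
    · simp [h]
  apply det_ne_zero_of_sum_row_lt_diag
  intro k
  have hs := Finset.add_sum_erase Finset.univ (fun j => PAct P S k j) (Finset.mem_univ k)
  simp only [h1 k] at hs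
  have e : ∑ j ∈ Finset.univ.erase k, ‖BMat β P S k j‖
      = β * ∑ j ∈ Finset.univ.erase k, PAct P S k j := by
    rw [Finset.mul_sum]
    apply Finset.sum_congr rfl
    intro j hj
    have hne : k ≠ j := (Finset.ne_of_mem_erase hj).symm
    simp [BMat, Matrix.one_apply_ne hne, abs_of_pos hβ0, abs_of_nonneg (h0 k j)]
  rw [e]
  have d : BMat β P S k k = 1 - β * PAct P S k k := by simp [BMat]
  rw [d]
  refine lt_of_lt_of_le ?_ (le_abs_self _)
  have : ∑ j ∈ Finset.univ.erase k, PAct P S k j = 1 - PAct P S k k := by linarith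
  rw [this]
  linarith

theorem decomp_aux {N : Type*} [Fintype N] [DecidableEq N]
    (P : Matrix N N ℝ) (β : ℝ) (hβ1 : β < 1) (S : Finset N)
    (hdet : (BMat β P S).det ≠ 0) (i : N) (x0 x1 : N → ℝ)
    (hx : Feasible β P i x0 x1) (c u m : N → ℝ)
    (hu : u = (HMat β P S).mulVec (fun j => if j ∈ S then c j else 0))
    (hm : ∀ j, m j = if j ∈ S then (1 - β) * u j else c j + β * ∑ k ∈ S, P j k * u k) :
    ∑ j, c j * x1 j = u i - ∑ j ∈ S, m j * x0 j + ∑ j ∈ Sᶜ, m j * x1 j := by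
  have hB : (BMat β P S).mulVec u = fun j => if j ∈ S then c j else 0 := by
    rw [hu, HMat, Matrix.mulVec_mulVec, Matrix.mul_nonsing_inv _ (isUnit_iff_ne_zero.mpr hdet),
      Matrix.one_mulVec]
  have hBj : ∀ j, u j - β * ∑ k, PAct P S j k * u k = if j ∈ S then c j else 0 := by
    intro j
    rw [← congrFun hB j, BMat, Matrix.sub_mulVec, Matrix.one_mulVec, Matrix.smul_mulVec]
    simp [Matrix.mulVec, dotProduct]
  have hoff : ∀ j, j ∉ S → u j = 0 := by
    intro j hj
    have h := hBj j
    simp [PAct, hj] at h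
    have h2 : (1 - β) * u j = 0 := by linarith
    rcases mul_eq_zero.mp h2 with h3 | h3
    · linarith
    · exact h3
  have hon : ∀ j, j ∈ S → u j - β * ∑ k, P j k * u k = c j := by
    intro j hj
    have h := hBj j
    simpa [PAct, hj] using h
  have hsum : ∀ j, ∑ k, P j k * u k = ∑ k ∈ S, P j k * u k := by
    intro j
    symm
    apply Finset.sum_subset (Finset.subset_univ S)
    intro k _ hk
    rw [hoff k hk, mul_zero]
  have hf := congrArg (fun v => v ⬝ᵥ u) hx.2.2
  simp only [add_dotProduct, smul_dotProduct, ← Matrix.dotProduct_mulVec, Matrix.sub_mulVec,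
    Matrix.one_mulVec, Matrix.smul_mulVec, single_dotProduct, one_mul, smul_eq_mul] at hf
  simp only [dotProduct, Pi.sub_apply, Pi.smul_apply, Matrix.mulVec, smul_eq_mul] at hf
  rw [← hf, Finset.mul_sum, ← Finset.sum_add_sum_compl S (fun j => (1 - β) * (x0 j * u j)),
    ← Finset.sum_add_sum_compl S (fun j => x1 j * _),
    ← Finset.sum_add_sum_compl S (fun j => c j * x1 j)]
  have e1 : ∑ j ∈ S, m j * x0 j = ∑ j ∈ S, (1 - β) * (x0 j * u j) :=
    Finset.sum_congr rfl fun j hj => by rw [hm j, if_pos hj]; ring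
  have e2 : ∑ j ∈ Sᶜ, (1 - β) * (x0 j * u j) = 0 :=
    Finset.sum_eq_zero fun j hj => by rw [hoff j (Finset.mem_compl.mp hj)]; ring
  have e3 : ∑ j ∈ S, x1 j * (u j - β * ∑ k, P j k * u k) = ∑ j ∈ S, c j * x1 j :=
    Finset.sum_congr rfl fun j hj => by rw [hon j hj]; ring
  have e4 : ∑ j ∈ Sᶜ, x1 j * (u j - β * ∑ k, P j k * u k)
      = ∑ j ∈ Sᶜ, c j * x1 j - ∑ j ∈ Sᶜ, m j * x1 j := by
    rw [← Finset.sum_sub_distrib]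
    refine Finset.sum_congr rfl fun j hj => ?_
    have hj' := Finset.mem_compl.mp hj
    rw [hm j, if_neg hj', hoff j hj', hsum j]; ring
  rw [e1, e2, e3, e4]
  ring

/-- Proposition 3(c): decomposition of the ν-charge objective relative
to the S-active policy. -/
theorem stmt6 {N : Type*} [Fintype N] [DecidableEq N] [Nonempty N]
    (P : Matrix N N ℝ) (hP0 : ∀ i j, 0 ≤ P i j) (hP1 : ∀ i, ∑ j, P i j = 1)
    (β : ℝ) (hβ0 : 0 < β) (hβ1 : β < 1)
    (R : N → ℝ) (ν : ℝ) (S : Finset N) (i : N) (x0 x1 : N → ℝ)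
    (hx : Feasible β P i x0 x1) :
    ∑ j, (R j - ν) * x1 j
      = fRew β P R S i - ν * gWork β P S i
        - ∑ j ∈ S, (rMarg β P R S j - ν * wMarg β P S j) * x0 j
        + ∑ j ∈ Sᶜ, (rMarg β P R S j - ν * wMarg β P S j) * x1 j := by
  have hdet := det_BMat_ne_zero P hP0 hP1 β hβ0 hβ1 S
  have h1 := decomp_aux P β hβ1 S hdet i x0 x1 hx R (fRew β P R S) (rMarg β P R S) rfl
    (fun j => rfl)
  have h2 := decomp_aux P β hβ1 S hdet i x0 x1 hx (fun _ => 1) (gWork β P S) (wMarg β P S) rfl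
    (fun j => rfl)
  simp only [sub_mul, Finset.sum_sub_distrib, mul_assoc, ← Finset.mul_sum]
  simp only [one_mul] at h2
  rw [h1, h2]
  ring
end
end

section
/- For every subset S ⊆ N and every state i ∈ N, the marginal workload is strictly positive: w_i^S > 0. -/
open Matrix BigOperators
open scoped Classical

noncomputable section

/-- Minimum principle. -/
theorem min_principle {N : Type*} [Fintype N] [Nonempty N]
    (Q : Matrix N N ℝ) (hQ0 : ∀ i j, 0 ≤ Q i j) (hQ1 : ∀ i, ∑ j, Q i j = 1)
    (β : ℝ) (hβ0 : 0 < β) (hβ1 : β < 1) (v : N → ℝ)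
    (hv : ∀ i, 0 ≤ v i - β * ∑ j, Q i j * v j) (i : N) : 0 ≤ v i := by
  obtain ⟨m, hm⟩ := Finite.exists_min v
  have h1 : v m ≤ ∑ j, Q m j * v j := by
    calc v m = ∑ j, Q m j * v m := by rw [← Finset.sum_mul, hQ1, one_mul]
      _ ≤ _ := Finset.sum_le_sum fun j _ => mul_le_mul_of_nonneg_left (hm j) (hQ0 m j)
  have h2 := hv m
  have h3 : 0 ≤ v m := by
    have := mul_le_mul_of_nonneg_left h1 hβ0.le
    by_contra hc
    nlinarith
  exact h3.trans (hm i)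

theorem BMat_mulVec {N : Type*} [Fintype N] [DecidableEq N] (β : ℝ) (P : Matrix N N ℝ)
    (S : Finset N) (v : N → ℝ) (i : N) :
    (BMat β P S).mulVec v i = v i - β * ∑ j, PAct P S i j * v j := by
  unfold BMat
  rw [Matrix.sub_mulVec, Matrix.one_mulVec, Matrix.smul_mulVec]
  simp [Matrix.mulVec, dotProduct]

/-- marginal workloads are strictly positive. -/
theorem stmt9 {N : Type*} [Fintype N] [DecidableEq N] [Nonempty N]
    (P : Matrix N N ℝ) (hP0 : ∀ i j, 0 ≤ P i j) (hP1 : ∀ i, ∑ j, P i j = 1)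
    (β : ℝ) (hβ0 : 0 < β) (hβ1 : β < 1) (S : Finset N) (i : N) :
    0 < wMarg β P S i := by
  have hQ0 : ∀ i j, 0 ≤ PAct P S i j := by
    intro i j
    unfold PAct
    split_ifs
    · exact hP0 i j
    · exact zero_le_one
    · exact le_rfl
  have hQ1 : ∀ i, ∑ j, PAct P S i j = 1 := by
    intro i
    by_cases h : i ∈ S
    · simpa [PAct, h] using hP1 i
    · simp [PAct, h]
  have hmin := min_principle (PAct P S) hQ0 hQ1 β hβ0 hβ1
  have hunit : IsUnit (BMat β P S) := by
    rw [← Matrix.mulVec_injective_iff_isUnit]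
    intro x y hxy
    have key : ∀ x y : N → ℝ, (BMat β P S).mulVec x = (BMat β P S).mulVec y →
        ∀ i, 0 ≤ (x - y) i := by
      intro x y hxy
      apply hmin
      intro i
      rw [← BMat_mulVec, Matrix.mulVec_sub, hxy, sub_self]
      exact le_rfl
    funext k
    have h1 := key x y hxy k
    have h2 := key y x hxy.symm k
    simp only [Pi.sub_apply] at h1 h2
    linarith
  have hg : ∀ k, gWork β P S k - β * ∑ j, PAct P S k j * gWork β P S j
      = if k ∈ S then 1 else 0 := by
    intro k
    rw [← BMat_mulVec]
    unfold gWork HMat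
    rw [Matrix.mulVec_mulVec,
      Matrix.mul_nonsing_inv _ ((Matrix.isUnit_iff_isUnit_det _).1 hunit), Matrix.one_mulVec]
  have hg0 : ∀ k, 0 ≤ gWork β P S k := by
    apply hmin
    intro k
    rw [hg]
    split_ifs <;> norm_num
  unfold wMarg
  split_ifs with h
  · have h1 := hg i
    rw [if_pos h] at h1
    have h2 : 0 ≤ β * ∑ j, PAct P S i j * gWork β P S j :=
      mul_nonneg hβ0.le (Finset.sum_nonneg fun j _ => mul_nonneg (hQ0 i j) (hg0 j))
    exact mul_pos (by linarith) (by linarith)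
  · have h2 : 0 ≤ β * ∑ j ∈ S, P i j * gWork β P S j :=
      mul_nonneg hβ0.le (Finset.sum_nonneg fun j _ => mul_nonneg (hP0 i j) (hg0 j))
    linarith
end
end

section
/- Fix S ⊆ N and j ∉ S, let T := S ∪ {j} and a := A^S_{jj} (so a ≠ 0). Then the marginal workloads update under the pivot as: w_i^T = w_i^S + (w_j^S / a) A^S_{ij} for i ∈ S; w_j^T = w_j^S / a; and w_i^T = w_i^S − (w_j^S / a) A^S_{ij} for i ∉ T. The same three relations hold with the marginal rewards r in place of the marginal workloads w. (Table 4 of the paper.) -/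
open Matrix BigOperators
open scoped Classical

noncomputable section

theorem aux_det {N : Type*} [Fintype N] [DecidableEq N]
    (P : Matrix N N ℝ) (hP0 : ∀ i j, 0 ≤ P i j) (hP1 : ∀ i, ∑ j, P i j = 1)
    (β : ℝ) (hβ0 : 0 < β) (hβ1 : β < 1) (S : Finset N) : IsUnit (BMat β P S).det := by
  have q0 : ∀ i j, 0 ≤ PAct P S i j := by
    intro i j
    unfold PAct
    split_ifs
    · exact hP0 i j
    · exact zero_le_one
    · exact le_refl _
  have q1 : ∀ i, ∑ j, PAct P S i j = 1 := by
    intro i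
    unfold PAct
    by_cases h : i ∈ S
    · simp [h, hP1]
    · simp [h]
  rw [isUnit_iff_ne_zero]
  apply det_ne_zero_of_sum_row_lt_diag
  intro i
  have e1 : ∑ k ∈ Finset.univ.erase i, ‖BMat β P S i k‖
      = ∑ k ∈ Finset.univ.erase i, β * PAct P S i k := by
    apply Finset.sum_congr rfl
    intro k hk
    have hk' : i ≠ k := fun h => (Finset.mem_erase.1 hk).1 h.symm
    simp [BMat, hk', abs_of_pos hβ0, abs_of_nonneg (q0 i k)]
  have e2 : ∑ k ∈ Finset.univ.erase i, PAct P S i k = 1 - PAct P S i i := by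
    rw [← q1 i, ← Finset.add_sum_erase _ _ (Finset.mem_univ i)]
    ring
  rw [e1, ← Finset.mul_sum, e2]
  have e3 : BMat β P S i i = 1 - β * PAct P S i i := by simp [BMat]
  rw [e3]
  refine lt_of_lt_of_le ?_ (le_abs_self _)
  linarith

theorem aux_B_mem {N : Type*} [Fintype N] [DecidableEq N] (P : Matrix N N ℝ) (β : ℝ)
    (S : Finset N) (v : N → ℝ) (i : N) (hi : i ∈ S) :
    (BMat β P S).mulVec v i = v i - β * ∑ k, P i k * v k := by
  rw [BMat, sub_mulVec, one_mulVec, smul_mulVec]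
  simp [mulVec, dotProduct, PAct, hi]

theorem aux_B_not {N : Type*} [Fintype N] [DecidableEq N] (P : Matrix N N ℝ) (β : ℝ)
    (S : Finset N) (v : N → ℝ) (i : N) (hi : i ∉ S) :
    (BMat β P S).mulVec v i = (1 - β) * v i := by
  rw [BMat, sub_mulVec, one_mulVec, smul_mulVec]
  simp [mulVec, dotProduct, PAct, hi]
  ring

theorem aux_N_not {N : Type*} [Fintype N] [DecidableEq N] (P : Matrix N N ℝ) (β : ℝ)
    (S : Finset N) (v : N → ℝ) (i : N) (hi : i ∉ S) :
    (NMat β P S).mulVec v i = v i - β * ∑ k, P i k * v k := by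
  rw [NMat, sub_mulVec, one_mulVec, smul_mulVec]
  simp [mulVec, dotProduct, PPas, hi]

theorem aux_N_mem {N : Type*} [Fintype N] [DecidableEq N] (P : Matrix N N ℝ) (β : ℝ)
    (S : Finset N) (v : N → ℝ) (i : N) (hi : i ∈ S) :
    (NMat β P S).mulVec v i = (1 - β) * v i := by
  rw [NMat, sub_mulVec, one_mulVec, smul_mulVec]
  simp [mulVec, dotProduct, PPas, hi]
  ring

theorem aux_r {N : Type*} [Fintype N] [DecidableEq N]
    (P : Matrix N N ℝ) (hP0 : ∀ i j, 0 ≤ P i j) (hP1 : ∀ i, ∑ j, P i j = 1)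
    (β : ℝ) (hβ0 : 0 < β) (hβ1 : β < 1) (R : N → ℝ)
    (S : Finset N) (j : N) (hj : j ∉ S) :
    AMat β P S j j ≠ 0 ∧
    (∀ i ∈ S, rMarg β P R (insert j S) i
        = rMarg β P R S i + (rMarg β P R S j / AMat β P S j j) * AMat β P S i j) ∧
    rMarg β P R (insert j S) j = rMarg β P R S j / AMat β P S j j ∧
    (∀ i, i ∉ insert j S → rMarg β P R (insert j S) i
        = rMarg β P R S i - (rMarg β P R S j / AMat β P S j j) * AMat β P S i j) := by
  have hβ : (1 - β) ≠ 0 := by linarith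
  have hdet := aux_det P hP0 hP1 β hβ0 hβ1
  have inj : ∀ (U : Finset N) (v : N → ℝ) (u : N → ℝ),
      (BMat β P U).mulVec v = u → v = (HMat β P U).mulVec u := by
    intro U v u h
    rw [← h, HMat, mulVec_mulVec, nonsing_inv_mul _ (hdet U), one_mulVec]
  have hf : ∀ U : Finset N, (BMat β P U).mulVec (fRew β P R U)
      = fun k => if k ∈ U then R k else 0 := by
    intro U
    rw [fRew, HMat, mulVec_mulVec, mul_nonsing_inv _ (hdet U), one_mulVec]
  have hf0 : ∀ (U : Finset N) (i : N), i ∉ U → fRew β P R U i = 0 := by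
    intro U i hi
    have h := congrFun (hf U) i
    rw [aux_B_not _ _ _ _ _ hi] at h
    simpa [hi, hβ] using h
  have hr : ∀ (U : Finset N) (i : N), i ∉ U →
      rMarg β P R U i = R i + β * ∑ k, P i k * fRew β P R U k := by
    intro U i hi
    rw [rMarg, if_neg hi]
    congr 2
    apply Finset.sum_subset (Finset.subset_univ _)
    intro k _ hk
    rw [hf0 U k hk, mul_zero]
  obtain ⟨h, hh⟩ : ∃ h, h = (HMat β P S).mulVec (Pi.single j 1) := ⟨_, rfl⟩
  have hBh : (BMat β P S).mulVec h = Pi.single j 1 := by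
    rw [hh, HMat, mulVec_mulVec, mul_nonsing_inv _ (hdet S), one_mulVec]
  have hA : ∀ i, AMat β P S i j = (NMat β P S).mulVec h i := by
    intro i
    rw [hh, mulVec_mulVec, mulVec_single_one]
    rfl
  have hhj : (1 - β) * h j = 1 := by
    have := congrFun hBh j
    rwa [aux_B_not _ _ _ _ _ hj, Pi.single_eq_same] at this
  have hh0 : ∀ i, i ∉ S → i ≠ j → h i = 0 := by
    intro i hi hij
    have := congrFun hBh i
    rw [aux_B_not _ _ _ _ _ hi, Pi.single_eq_of_ne hij] at this
    simpa [hβ] using this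
  have hT : ∀ (v : N → ℝ) (i : N), i ≠ j →
      (BMat β P (insert j S)).mulVec v i = (BMat β P S).mulVec v i := by
    intro v i hij
    by_cases hi : i ∈ S
    · rw [aux_B_mem _ _ _ _ _ hi, aux_B_mem _ _ _ _ _ (Finset.mem_insert_of_mem hi)]
    · rw [aux_B_not _ _ _ _ _ hi, aux_B_not _ _ _ _ _ (by simp [hi, hij])]
  have hTj : ∀ (v : N → ℝ),
      (BMat β P (insert j S)).mulVec v j = (NMat β P S).mulVec v j := by
    intro v
    rw [aux_B_mem _ _ _ _ _ (Finset.mem_insert_self j S), aux_N_not _ _ _ _ _ hj]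
  have ha : AMat β P S j j ≠ 0 := by
    intro h0
    have hz : (BMat β P (insert j S)).mulVec h = 0 := by
      funext i
      by_cases hij : i = j
      · subst hij
        rw [hTj, ← hA, h0]; rfl
      · rw [hT _ _ hij, hBh, Pi.single_eq_of_ne hij]; rfl
    have := inj _ _ _ hz
    rw [mulVec_zero] at this
    rw [this] at hhj
    simp at hhj
  obtain ⟨c, hc⟩ : ∃ c, c = rMarg β P R S j / AMat β P S j j := ⟨_, rfl⟩
  have hca : c * AMat β P S j j = rMarg β P R S j := by
    rw [hc, div_mul_cancel₀ _ ha]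
  have hfT : fRew β P R (insert j S) = fRew β P R S + c • h := by
    symm
    apply inj
    funext i
    by_cases hij : i = j
    · subst hij
      rw [hTj, mulVec_add, mulVec_smul, Pi.add_apply, Pi.smul_apply, ← hA, smul_eq_mul, hca,
        hr S i hj, aux_N_not _ _ _ _ _ hj, hf0 S i hj, if_pos (Finset.mem_insert_self i S)]
      ring
    · rw [hT _ _ hij, mulVec_add, mulVec_smul, hf, hBh]
      simp [hij]
  rw [← hc]
  refine ⟨ha, ?_, ?_, ?_⟩
  · intro i hi
    rw [rMarg, rMarg, if_pos hi, if_pos (Finset.mem_insert_of_mem hi), hfT, hA,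
      aux_N_mem _ _ _ _ _ hi, Pi.add_apply, Pi.smul_apply, smul_eq_mul]
    ring
  · rw [rMarg, if_pos (Finset.mem_insert_self j S), hfT, Pi.add_apply, Pi.smul_apply,
      hf0 S j hj, smul_eq_mul]
    linear_combination c * hhj
  · intro i hi
    have hi' : i ≠ j ∧ i ∉ S := by simpa using hi
    rw [hr _ i hi, hr S i hi'.2, hA, aux_N_not _ _ _ _ _ hi'.2, hh0 i hi'.2 hi'.1, hfT]
    have : ∑ k, P i k * (fRew β P R S + c • h) k
        = ∑ k, P i k * fRew β P R S k + c * ∑ k, P i k * h k := by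
      rw [Finset.mul_sum, ← Finset.sum_add_distrib]
      apply Finset.sum_congr rfl
      intro k _
      simp only [Pi.add_apply, Pi.smul_apply, smul_eq_mul]
      ring
    rw [this]
    ring

theorem aux_w {N : Type*} [Fintype N] [DecidableEq N] (P : Matrix N N ℝ) (β : ℝ)
    (S : Finset N) (i : N) : wMarg β P S i = rMarg β P (fun _ => 1) S i := rfl

/-- Table 4: the pivot-update formulas for the marginal workloads and
marginal rewards. -/
theorem stmt12 {N : Type*} [Fintype N] [DecidableEq N] [Nonempty N]
    (P : Matrix N N ℝ) (hP0 : ∀ i j, 0 ≤ P i j) (hP1 : ∀ i, ∑ j, P i j = 1)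
    (β : ℝ) (hβ0 : 0 < β) (hβ1 : β < 1) (R : N → ℝ)
    (S : Finset N) (j : N) (hj : j ∉ S) :
    AMat β P S j j ≠ 0 ∧
    (∀ i ∈ S, wMarg β P (insert j S) i
        = wMarg β P S i + (wMarg β P S j / AMat β P S j j) * AMat β P S i j) ∧
    wMarg β P (insert j S) j = wMarg β P S j / AMat β P S j j ∧
    (∀ i, i ∉ insert j S → wMarg β P (insert j S) i
        = wMarg β P S i - (wMarg β P S j / AMat β P S j j) * AMat β P S i j) ∧
    (∀ i ∈ S, rMarg β P R (insert j S) i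
        = rMarg β P R S i + (rMarg β P R S j / AMat β P S j j) * AMat β P S i j) ∧
    rMarg β P R (insert j S) j = rMarg β P R S j / AMat β P S j j ∧
    (∀ i, i ∉ insert j S → rMarg β P R (insert j S) i
        = rMarg β P R S i - (rMarg β P R S j / AMat β P S j j) * AMat β P S i j) := by
  obtain ⟨ha, r1, r2, r3⟩ := aux_r P hP0 hP1 β hβ0 hβ1 R S j hj
  obtain ⟨_, w1, w2, w3⟩ := aux_r P hP0 hP1 β hβ0 hβ1 (fun _ => 1) S j hj
  exact ⟨ha, w1, w2, w3, r1, r2, r3⟩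
end
end
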